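/- Let 0 ≤ θ ≤ 1/4 and for P ≥ 2 put M = P^θ, H = P·M^{−4} and Q = P·M^{−1}. Then for every ε > 0 there exist η > 0 and C > 0 such that for all P ≥ 2 and all R with 1 ≤ R ≤ P^η one has ∫₀¹ |E₀(α)|²·|g₀(α;2Q,R)|⁴ dα ≤ C·(P·H·M²)²·Q^{1+ε}. -/

import Mathlib

open MeasureTheory
open scoped Classical

/-- `e(α) = exp(2πiα)`. -/
noncomputable def eC (α : ℝ) : ℂ := Complex.exp (2 * Real.pi * Complex.I * α)

/-- With `M = P^θ`, `H = P M⁻⁴`, the exponential sum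
`E₀(α) = ∑_{1≤h≤H} ∑_{1≤l≤2P} ∑_{M<m₁<m₂≤MR} e(8α l h³ (m₁⁸ − m₂⁸))`. -/
noncomputable def E0 (P θ R α : ℝ) : ℂ :=
  ∑ h ∈ Finset.Icc (1 : ℤ) ⌊P / (P ^ θ) ^ 4⌋,
    ∑ l ∈ Finset.Icc (1 : ℤ) ⌊2 * P⌋,
      ∑ m₂ ∈ Finset.Icc (⌊P ^ θ⌋ + 1) ⌊P ^ θ * R⌋,
        ∑ m₁ ∈ Finset.Icc (⌊P ^ θ⌋ + 1) (m₂ - 1),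
          eC (8 * α * (l : ℝ) * (h : ℝ) ^ 3 * ((m₁ : ℝ) ^ 8 - (m₂ : ℝ) ^ 8))

/-- An integer is `R`-smooth if all of its prime divisors are at most `R`. -/
def IsSmooth (R : ℝ) (x : ℤ) : Prop := ∀ p : ℕ, p.Prime → (p : ℤ) ∣ x → (p : ℝ) ≤ R

/-- The smooth quartic Weyl sum `g_δ(α; P, R) = ∑_{x ∈ 𝒜(P,R), δP < x ≤ P} e(αx⁴)`. -/
noncomputable def gW (δ P R α : ℝ) : ℂ :=
  ∑ x ∈ Finset.Icc (⌊δ * P⌋ + 1) ⌊P⌋,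
    if IsSmooth R x then eC (α * (x : ℝ) ^ 4) else 0

theorem divisor_bound (δ : ℝ) (hδ : 0 < δ) : ∃ K : ℝ, 1 ≤ K ∧ ∀ n : ℕ, n ≠ 0 →
    ((Nat.divisors n).card : ℝ) ≤ K * (n : ℝ) ^ δ := by
  have hl2 : 0 < Real.log 2 := Real.log_pos (by norm_num)
  set L : ℝ := 1 + 1 / (δ * Real.log 2) with hL
  have hL1 : 1 ≤ L := by
    have : 0 < 1 / (δ * Real.log 2) := by positivity
    linarith
  set B : ℕ := ⌈(2 : ℝ) ^ (1 / δ)⌉₊ with hB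
  refine ⟨L ^ B, one_le_pow₀ hL1, ?_⟩
  intro n hn
  have key : ∀ p ∈ n.primeFactors, ((n.factorization p : ℝ) + 1) ≤
      (if p < B then L else 1) * ((p : ℝ) ^ (n.factorization p)) ^ δ := by
    intro p hp
    have hp2 : (2 : ℝ) ≤ p := by exact_mod_cast (Nat.prime_of_mem_primeFactors hp).two_le
    generalize n.factorization p = k
    have e1 : ((p : ℝ) ^ k) ^ δ = ((p : ℝ) ^ δ) ^ k := by
      rw [← Real.rpow_natCast, ← Real.rpow_natCast, ← Real.rpow_mul (by linarith),
        ← Real.rpow_mul (by linarith), mul_comm]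
    rw [e1]
    split_ifs with h
    · have h1 : 1 + δ * Real.log 2 ≤ (p : ℝ) ^ δ := by
        calc 1 + δ * Real.log 2 ≤ Real.exp (Real.log 2 * δ) := by
              have := Real.add_one_le_exp (Real.log 2 * δ); linarith
          _ = 2 ^ δ := by rw [Real.rpow_def_of_pos (by norm_num)]
          _ ≤ _ := Real.rpow_le_rpow (by norm_num) hp2 hδ.le
      have h2 : 1 + (k : ℝ) * (δ * Real.log 2) ≤ ((p : ℝ) ^ δ) ^ k := by
        calc 1 + (k : ℝ) * (δ * Real.log 2) ≤ (1 + δ * Real.log 2) ^ k :=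
              one_add_mul_le_pow (by have := mul_pos hδ hl2; linarith) k
          _ ≤ _ := pow_le_pow_left₀ (by positivity) h1 k
      have h3 : (k : ℝ) + 1 ≤ L * (1 + (k : ℝ) * (δ * Real.log 2)) := by
        have : L * (1 + (k : ℝ) * (δ * Real.log 2)) =
            1 + (k : ℝ) * (δ * Real.log 2) + 1 / (δ * Real.log 2) + k := by
          rw [hL]; field_simp; ring
        rw [this]
        have : 0 ≤ (k : ℝ) * (δ * Real.log 2) + 1 / (δ * Real.log 2) := by positivity
        linarith
      exact h3.trans (by gcongr)
    · push Not at h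
      have h1 : (2 : ℝ) ≤ (p : ℝ) ^ δ := by
        have : (2 : ℝ) ^ (1 / δ) ≤ p := (Nat.le_ceil _).trans (by exact_mod_cast h)
        calc (2 : ℝ) = ((2 : ℝ) ^ (1 / δ)) ^ δ := by
              rw [← Real.rpow_mul (by norm_num)]; simp [hδ.ne']
          _ ≤ _ := Real.rpow_le_rpow (by positivity) this hδ.le
      have h2 : (2 : ℝ) ^ k ≤ ((p : ℝ) ^ δ) ^ k := pow_le_pow_left₀ (by norm_num) h1 k
      have h3 : ((k + 1 : ℕ) : ℝ) ≤ ((2 ^ k : ℕ) : ℝ) := by exact_mod_cast Nat.lt_two_pow_self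
      push_cast at h3
      linarith
  have hcard : ((Nat.divisors n).card : ℝ) = ∏ p ∈ n.primeFactors, ((n.factorization p : ℝ) + 1) := by
    rw [Nat.card_divisors hn]; push_cast; rfl
  have hnn : (n : ℝ) = ∏ p ∈ n.primeFactors, ((p : ℝ) ^ (n.factorization p)) := by
    conv_lhs => rw [← Nat.prod_factorization_pow_eq_self hn]
    rw [Nat.prod_factorization_eq_prod_primeFactors]
    push_cast; rfl
  rw [hcard]
  calc _ ≤ ∏ p ∈ n.primeFactors, ((if p < B then L else 1) * ((p : ℝ) ^ (n.factorization p)) ^ δ) :=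
        Finset.prod_le_prod (fun _ _ => by positivity) key
    _ = (∏ p ∈ n.primeFactors, (if p < B then L else 1)) * (n : ℝ) ^ δ := by
        rw [Finset.prod_mul_distrib]
        congr 1
        conv_rhs => rw [hnn]
        rw [Real.finsetProd_rpow]
        intro i _; positivity
    _ ≤ L ^ B * (n : ℝ) ^ δ := by
        gcongr
        rw [← Finset.prod_filter, Finset.prod_const]
        apply pow_le_pow_right₀ hL1
        calc _ ≤ (Finset.range B).card := Finset.card_le_card (by
                intro p hp; simp at hp ⊢; exact hp.2)
          _ = B := by simp

theorem eC_add (a b : ℝ) : eC (a + b) = eC a * eC b := by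
  unfold eC; rw [← Complex.exp_add]; congr 1; push_cast; ring

theorem eC_conj (a : ℝ) : (starRingEnd ℂ) (eC a) = eC (-a) := by
  unfold eC; rw [← Complex.exp_conj]; congr 1
  simp [Complex.conj_ofNat]

theorem eC_cont (n : ℤ) : Continuous fun α : ℝ => eC (α * n) := by
  unfold eC; fun_prop

theorem eC_integral (n : ℤ) : (∫ α in (0:ℝ)..1, eC (α * n)) = if n = 0 then 1 else 0 := by
  split_ifs with h
  · subst h; simp [eC]
  · have h0 : (2 * Real.pi * Complex.I * n : ℂ) ≠ 0 := by
      simp [Real.pi_ne_zero, h]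
    have : ∀ α : ℝ, eC (α * n) = Complex.exp ((2 * Real.pi * Complex.I * n) * α) := by
      intro α; unfold eC; congr 1; push_cast; ring
    simp_rw [this]
    rw [integral_exp_mul_complex h0]
    have : Complex.exp ((2 * Real.pi * Complex.I * n) * (1:ℝ)) = 1 := by
      rw [Complex.exp_eq_one_iff]; exact ⟨n, by push_cast; ring⟩
    rw [this]; simp

/-- generic exponential sum -/
noncomputable def xs {ι : Type*} (s : Finset ι) (φ : ι → ℤ) (α : ℝ) : ℂ := ∑ i ∈ s, eC (α * (φ i : ℤ))

theorem xs_cont {ι : Type*} (s : Finset ι) (φ : ι → ℤ) : Continuous (xs s φ) := by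
  unfold xs; exact continuous_finsetSum _ fun i _ => eC_cont _

theorem xs_normSq {ι : Type*} (s : Finset ι) (φ : ι → ℤ) (α : ℝ) :
    ((‖xs s φ α‖ ^ 2 : ℝ) : ℂ) = ∑ p ∈ s ×ˢ s, eC (α * ((φ p.1 - φ p.2 : ℤ) : ℝ)) := by
  push_cast
  rw [← Complex.mul_conj']
  unfold xs
  rw [map_sum, Finset.sum_mul_sum, Finset.sum_product]
  refine Finset.sum_congr rfl fun i _ => Finset.sum_congr rfl fun j _ => ?_
  rw [eC_conj, ← eC_add]; congr 1; push_cast; ring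

theorem parseval {ι : Type*} (s : Finset ι) (φ : ι → ℤ) :
    (∫ α in (0:ℝ)..1, ‖xs s φ α‖ ^ 2) = ((s ×ˢ s).filter fun p => φ p.1 = φ p.2).card := by
  have : ((∫ α in (0:ℝ)..1, ‖xs s φ α‖ ^ 2 : ℝ) : ℂ) =
      (((s ×ˢ s).filter fun p => φ p.1 = φ p.2).card : ℝ) := by
    rw [← intervalIntegral.integral_ofReal]
    simp_rw [xs_normSq]
    rw [intervalIntegral.integral_finsetSum (fun i _ => (eC_cont _).intervalIntegrable _ _)]
    simp_rw [eC_integral, sub_eq_zero]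
    simp
  exact_mod_cast this

theorem xs_mul {ι κ : Type*} (s : Finset ι) (φ : ι → ℤ) (t : Finset κ) (ψ : κ → ℤ) (α : ℝ) :
    xs s φ α * xs t ψ α = xs (s ×ˢ t) (fun p => φ p.1 + ψ p.2) α := by
  unfold xs
  rw [Finset.sum_mul_sum, Finset.sum_product]
  refine Finset.sum_congr rfl fun i _ => Finset.sum_congr rfl fun j _ => ?_
  rw [← eC_add]; congr 1; push_cast; ring

/-- Weyl differencing -/
theorem weyl (A : Finset ℤ) (N : ℕ) (hA : A ⊆ Finset.Icc 1 (N : ℤ)) (α : ℝ) :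
    ‖xs A (fun x => x ^ 4) α‖ ^ 4 ≤ (2 * N + 1) * ∑ j ∈ Finset.Icc (-(N : ℤ)) N,
      ‖xs (A.filter fun y => y + j ∈ A) (fun y => (y + j) ^ 4 - y ^ 4) α‖ ^ 2 := by
  have h1 : ((‖xs A (fun x => x ^ 4) α‖ ^ 2 : ℝ) : ℂ) = ∑ j ∈ Finset.Icc (-(N : ℤ)) N,
      xs (A.filter fun y => y + j ∈ A) (fun y => (y + j) ^ 4 - y ^ 4) α := by
    rw [xs_normSq]
    unfold xs
    rw [Finset.sum_sigma']
    refine Finset.sum_bij' (fun p _ => ⟨p.1 - p.2, p.2⟩) (fun q _ => (q.2 + q.1, q.2)) ?_ ?_ ?_ ?_ ?_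
    · intro p hp
      simp only [Finset.mem_product] at hp
      have a := Finset.mem_Icc.1 (hA hp.1)
      have b := Finset.mem_Icc.1 (hA hp.2)
      simp only [Finset.mem_sigma, Finset.mem_Icc, Finset.mem_filter]
      refine ⟨⟨by omega, by omega⟩, hp.2, ?_⟩
      simpa using hp.1
    · intro q hq
      simp only [Finset.mem_sigma, Finset.mem_filter] at hq
      simp only [Finset.mem_product]
      exact ⟨hq.2.2, hq.2.1⟩
    · intro p _; simp
    · intro q _; simp
    · intro p _; simp
  have h2 : ‖xs A (fun x => x ^ 4) α‖ ^ 2 ≤ ∑ j ∈ Finset.Icc (-(N : ℤ)) N,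
      ‖xs (A.filter fun y => y + j ∈ A) (fun y => (y + j) ^ 4 - y ^ 4) α‖ := by
    have := norm_sum_le (Finset.Icc (-(N : ℤ)) N) (fun j =>
      xs (A.filter fun y => y + j ∈ A) (fun y => (y + j) ^ 4 - y ^ 4) α)
    rw [← h1, Complex.norm_real, Real.norm_of_nonneg (by positivity)] at this
    exact this
  calc ‖xs A (fun x => x ^ 4) α‖ ^ 4 = (‖xs A (fun x => x ^ 4) α‖ ^ 2) ^ 2 := by ring
    _ ≤ (∑ j ∈ Finset.Icc (-(N : ℤ)) N,
      ‖xs (A.filter fun y => y + j ∈ A) (fun y => (y + j) ^ 4 - y ^ 4) α‖) ^ 2 := by gcongr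
    _ ≤ _ := sq_sum_le_card_mul_sum_sq
    _ = _ := by
      congr 1
      have : (Finset.Icc (-(N : ℤ)) N).card = 2 * N + 1 := by
        rw [Int.card_Icc]; omega
      rw [this]; push_cast; ring

theorem int_bound {ι : Type*} (U : Finset ι) (φ : ι → ℤ) (A : Finset ℤ) (N : ℕ)
    (hA : A ⊆ Finset.Icc 1 (N : ℤ)) :
    (∫ α in (0:ℝ)..1, ‖xs U φ α‖ ^ 2 * ‖xs A (fun x => x ^ 4) α‖ ^ 4) ≤
      (2 * N + 1) * ∑ j ∈ Finset.Icc (-(N : ℤ)) N,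
        (((U ×ˢ (A.filter fun y => y + j ∈ A)) ×ˢ (U ×ˢ (A.filter fun y => y + j ∈ A))).filter
          fun p => φ p.1.1 + ((p.1.2 + j) ^ 4 - p.1.2 ^ 4) =
            φ p.2.1 + ((p.2.2 + j) ^ 4 - p.2.2 ^ 4)).card := by
  have c1 := xs_cont U φ
  have c2 := xs_cont A (fun x => x ^ 4)
  have c3 := fun j : ℤ => xs_cont (A.filter fun y => y + j ∈ A) (fun y => (y + j) ^ 4 - y ^ 4)
  calc _ ≤ ∫ α in (0:ℝ)..1, (2 * N + 1) * ∑ j ∈ Finset.Icc (-(N : ℤ)) N,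
        ‖xs (U ×ˢ (A.filter fun y => y + j ∈ A)) (fun p => φ p.1 + ((p.2 + j) ^ 4 - p.2 ^ 4)) α‖ ^ 2 := by
        apply intervalIntegral.integral_mono_on (by norm_num)
        · exact Continuous.intervalIntegrable ((c1.norm.pow 2).mul (c2.norm.pow 4)) _ _
        · refine Continuous.intervalIntegrable ?_ _ _
          refine continuous_const.mul (continuous_finsetSum _ fun j _ => ?_)
          exact (xs_cont _ _).norm.pow 2
        · intro α _
          refine (mul_le_mul_of_nonneg_left (weyl A N hA α) (by positivity)).trans (le_of_eq ?_)
          rw [mul_left_comm, Finset.mul_sum]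
          congr 1
          refine Finset.sum_congr rfl fun j _ => ?_
          rw [← mul_pow, ← norm_mul, xs_mul]
    _ = _ := by
        rw [intervalIntegral.integral_const_mul, intervalIntegral.integral_finsetSum]
        · push_cast
          congr 1
          refine Finset.sum_congr rfl fun j _ => ?_
          exact parseval _ _
        · intro j _
          exact Continuous.intervalIntegrable ((xs_cont _ _).norm.pow 2) _ _

/-- the differenced triples -/
noncomputable def GG (A : Finset ℤ) (N : ℕ) : Finset (ℤ × ℤ × ℤ) :=
  (Finset.Icc (-(N : ℤ)) N ×ˢ A ×ˢ A).filter fun q => q.2.1 + q.1 ∈ A ∧ q.2.2 + q.1 ∈ A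

def pp (q : ℤ × ℤ × ℤ) : ℤ := ((q.2.1 + q.1) ^ 4 - q.2.1 ^ 4) - ((q.2.2 + q.1) ^ 4 - q.2.2 ^ 4)

theorem pp_eq (q : ℤ × ℤ × ℤ) : pp q = q.1 * ((q.2.1 - q.2.2) *
    ((q.2.1 - q.2.2) ^ 2 + q.1 ^ 2 + 3 * (q.2.1 + q.2.2 + q.1) ^ 2)) := by
  unfold pp; ring

theorem count_split {ι : Type*} (U : Finset ι) (φ : ι → ℤ) (A : Finset ℤ) (N : ℕ) :
    ∑ j ∈ Finset.Icc (-(N : ℤ)) N,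
        (((U ×ˢ (A.filter fun y => y + j ∈ A)) ×ˢ (U ×ˢ (A.filter fun y => y + j ∈ A))).filter
          fun p => φ p.1.1 + ((p.1.2 + j) ^ 4 - p.1.2 ^ 4) =
            φ p.2.1 + ((p.2.2 + j) ^ 4 - p.2.2 ^ 4)).card
      ≤ ∑ w ∈ U ×ˢ U, ((GG A N).filter fun q => pp q = φ w.2 - φ w.1).card := by
  rw [← Finset.card_sigma, ← Finset.card_sigma]
  refine Finset.card_le_card_of_injOn
    (fun s => ⟨(s.2.1.1, s.2.2.1), (s.1, s.2.1.2, s.2.2.2)⟩) ?_ ?_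
  · rintro ⟨j, ⟨⟨u, y⟩, ⟨v, z⟩⟩⟩ h
    simp only [Finset.coe_sigma, Set.mem_sigma_iff, Finset.mem_coe, Finset.mem_filter,
      Finset.mem_product] at h
    obtain ⟨hj, ⟨⟨hu, hy, hy'⟩, hv, hz, hz'⟩, e⟩ := h
    simp only [Finset.coe_sigma, Set.mem_sigma_iff, Finset.mem_coe]
    refine ⟨Finset.mem_product.2 ⟨hu, hv⟩, Finset.mem_filter.2 ⟨Finset.mem_filter.2
      ⟨Finset.mem_product.2 ⟨hj, Finset.mem_product.2 ⟨hy, hz⟩⟩, hy', hz'⟩, ?_⟩⟩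
    simp only [pp]
    linarith
  · rintro ⟨j, ⟨⟨u, y⟩, ⟨v, z⟩⟩⟩ _ ⟨j', ⟨⟨u', y'⟩, ⟨v', z'⟩⟩⟩ _ h
    simp only [Sigma.mk.injEq, Prod.mk.injEq, heq_eq_eq] at h
    obtain ⟨⟨rfl, rfl⟩, rfl, rfl, rfl⟩ := h
    rfl

theorem count_zero (A : Finset ℤ) (N : ℕ) (hA : A ⊆ Finset.Icc 1 (N : ℤ)) :
    ((GG A N).filter fun q => pp q = 0).card ≤ 4 * N ^ 2 := by
  have hc : A.card ≤ N := by
    have := Finset.card_le_card hA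
    simpa using this
  have hsub : ((GG A N).filter fun q => pp q = 0) ⊆
      ({0} ×ˢ A ×ˢ A) ∪ ((Finset.Icc (-(N : ℤ)) N ×ˢ A).image fun p => (p.1, p.2, p.2)) := by
    rintro ⟨j, y, z⟩ h
    simp only [GG, Finset.mem_filter, Finset.mem_product, pp_eq] at h
    obtain ⟨⟨⟨hj, hy, hz⟩, hy', hz'⟩, e⟩ := h
    have a := Finset.mem_Icc.1 (hA hy)
    have b := Finset.mem_Icc.1 (hA hz')
    rcases mul_eq_zero.1 e with e | e
    · subst e
      simp [hy, hz]
    · rcases mul_eq_zero.1 e with e | e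
      · have : y = z := by linarith
        subst this
        simp only [Finset.mem_union, Finset.mem_image, Finset.mem_product]
        exact Or.inr ⟨(j, y), ⟨hj, hy⟩, rfl⟩
      · exfalso
        nlinarith [sq_nonneg (y - z), sq_nonneg j, sq_nonneg (y + z + j)]
  refine (Finset.card_le_card hsub).trans ((Finset.card_union_le _ _).trans ?_)
  have h1 : (({0} : Finset ℤ) ×ˢ A ×ˢ A).card ≤ N ^ 2 := by
    simp only [Finset.card_product, Finset.card_singleton, one_mul]; nlinarith
  have h2 : ((Finset.Icc (-(N : ℤ)) N ×ˢ A).image fun p => (p.1, p.2, p.2)).card ≤ (2 * N + 1) * N := by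
    refine Finset.card_image_le.trans ?_
    rw [Finset.card_product]
    have : (Finset.Icc (-(N : ℤ)) N).card = 2 * N + 1 := by
      rw [Int.card_Icc]; omega
    rw [this]; gcongr
  have : N ≤ N ^ 2 := Nat.le_self_pow (by norm_num) N
  nlinarith

noncomputable def ds (n : ℤ) : Finset ℤ :=
  (n.natAbs.divisors.image fun d : ℕ => (d : ℤ)) ∪ (n.natAbs.divisors.image fun d : ℕ => -(d : ℤ))

theorem ds_card (n : ℤ) : (ds n).card ≤ 2 * n.natAbs.divisors.card := by
  unfold ds
  refine (Finset.card_union_le _ _).trans ?_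
  have h1 := Finset.card_image_le (s := n.natAbs.divisors) (f := fun d : ℕ => (d : ℤ))
  have h2 := Finset.card_image_le (s := n.natAbs.divisors) (f := fun d : ℕ => -(d : ℤ))
  omega

theorem nat_mem (n j : ℤ) (hn : n ≠ 0) (h : j ∣ n) : j.natAbs ∈ n.natAbs.divisors := by
  rw [Nat.mem_divisors]; exact ⟨Int.natAbs_dvd_natAbs.2 h, by simpa using hn⟩

theorem ds_mem (n j : ℤ) (hn : n ≠ 0) (h : j ∣ n) : j ∈ ds n := by
  have := nat_mem n j hn h
  unfold ds
  simp only [Finset.mem_union, Finset.mem_image]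
  rcases Int.natAbs_eq j with e | e
  · exact Or.inl ⟨_, this, e.symm⟩
  · exact Or.inr ⟨_, this, e.symm⟩

theorem count_ne (A : Finset ℤ) (N : ℕ) (hA : A ⊆ Finset.Icc 1 (N : ℤ)) (n : ℤ) (hn : n ≠ 0) :
    ((GG A N).filter fun q => pp q = n).card ≤ 4 * n.natAbs.divisors.card ^ 2 := by
  have : ((GG A N).filter fun q => pp q = n).card ≤ (ds n ×ˢ ds n).card := by
    refine Finset.card_le_card_of_injOn (fun q => (q.1, q.2.1 - q.2.2)) ?_ ?_
    · rintro ⟨j, y, z⟩ h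
      simp only [Finset.coe_filter, Set.mem_ofPred_eq, pp_eq] at h
      simp only [Finset.coe_product, Set.mem_prod, Finset.mem_coe]
      refine ⟨ds_mem n _ hn ⟨_, h.2.symm⟩, ds_mem n _ hn ?_⟩
      rw [← h.2]
      exact dvd_mul_of_dvd_right (dvd_mul_right _ _) _
    · rintro ⟨j, y, z⟩ h ⟨j', y', z'⟩ h' e
      simp only [Finset.coe_filter, Set.mem_ofPred_eq, pp_eq, GG, Finset.mem_filter,
        Finset.mem_product] at h h'
      simp only [Prod.mk.injEq] at e
      obtain ⟨rfl, e⟩ := e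
      obtain ⟨⟨⟨_, hy, hz⟩, hy1, _⟩, h⟩ := h
      obtain ⟨⟨⟨_, hy', hz'⟩, hy1', _⟩, h'⟩ := h'
      have a1 := (Finset.mem_Icc.1 (hA hy1)).1
      have a2 := (Finset.mem_Icc.1 (hA hz)).1
      have a3 := (Finset.mem_Icc.1 (hA hy1')).1
      have a4 := (Finset.mem_Icc.1 (hA hz')).1
      have hj : j ≠ 0 := by rintro rfl; simp at h; exact hn h.symm
      have ht : y - z ≠ 0 := by intro h0; rw [h0] at h; simp at h; exact hn h.symm
      rw [← e] at h'
      have h2 := mul_left_cancel₀ ht (mul_left_cancel₀ hj (h.trans h'.symm))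
      have h3 : (y + z + j) ^ 2 = (y' + z' + j) ^ 2 := by linarith
      have h4 : y + z + j = y' + z' + j :=
        (pow_left_inj₀ (by linarith) (by linarith) (by norm_num)).1 h3
      have : y = y' := by linarith
      have : z = z' := by linarith
      subst_vars; rfl
  refine this.trans ?_
  rw [Finset.card_product]
  have := ds_card n
  nlinarith

theorem count_all {ι : Type*} (U : Finset ι) (φ : ι → ℤ) (A : Finset ℤ) (N : ℕ)
    (hA : A ⊆ Finset.Icc 1 (N : ℤ)) (D : ℝ) (_hD : 0 ≤ D)
    (h1 : ∀ u ∈ U, ∀ v ∈ U, φ v - φ u ≠ 0 → ((φ v - φ u).natAbs.divisors.card : ℝ) ≤ D)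
    (h2 : ∀ u ∈ U, ((U.filter fun v => φ v = φ u).card : ℝ) ≤ D ^ 4) :
    (∫ α in (0:ℝ)..1, ‖xs U φ α‖ ^ 2 * ‖xs A (fun x => x ^ 4) α‖ ^ 4) ≤
      (2 * N + 1) * (4 * N ^ 2 * (U.card * D ^ 4) + 4 * D ^ 2 * U.card ^ 2) := by
  refine (int_bound U φ A N hA).trans ?_
  gcongr
  have h := count_split U φ A N
  have h' : ((∑ w ∈ U ×ˢ U, ((GG A N).filter fun q => pp q = φ w.2 - φ w.1).card : ℕ) : ℝ) ≤
      4 * N ^ 2 * (U.card * D ^ 4) + 4 * D ^ 2 * U.card ^ 2 := by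
    push_cast
    calc _ ≤ ∑ w ∈ U ×ˢ U, ((if φ w.2 = φ w.1 then 4 * (N : ℝ) ^ 2 else 0) + 4 * D ^ 2) := by
          refine Finset.sum_le_sum fun w hw => ?_
          rw [Finset.mem_product] at hw
          split_ifs with e
          · have := count_zero A N hA
            rw [e, sub_self]
            have : (((GG A N).filter fun q => pp q = 0).card : ℝ) ≤ 4 * (N : ℝ) ^ 2 := by
              exact_mod_cast this
            have : 0 ≤ 4 * D ^ 2 := by positivity
            linarith
          · have e' : φ w.2 - φ w.1 ≠ 0 := sub_ne_zero.2 e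
            have a := count_ne A N hA _ e'
            have b := h1 _ hw.1 _ hw.2 e'
            have a' : (((GG A N).filter fun q => pp q = φ w.2 - φ w.1).card : ℝ) ≤
              4 * ((φ w.2 - φ w.1).natAbs.divisors.card : ℝ) ^ 2 := by exact_mod_cast a
            refine a'.trans ?_
            rw [zero_add]
            gcongr
      _ = 4 * N ^ 2 * (∑ u ∈ U, ((U.filter fun v => φ v = φ u).card : ℝ)) + 4 * D ^ 2 * U.card ^ 2 := by
          rw [Finset.sum_add_distrib, Finset.sum_product]
          congr 1
          · rw [Finset.mul_sum]
            refine Finset.sum_congr rfl fun u _ => ?_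
            rw [← Finset.sum_filter]
            simp [mul_comm]
          · simp; ring
      _ ≤ _ := by
          gcongr
          refine (Finset.sum_le_sum h2).trans ?_
          simp
  refine le_trans ?_ h'
  exact_mod_cast h

/-- index set of E0 -/
noncomputable def UU (P θ R : ℝ) : Finset (ℤ × ℤ × ℤ × ℤ) :=
  (Finset.Icc (1 : ℤ) ⌊P / (P ^ θ) ^ 4⌋ ×ˢ Finset.Icc (1 : ℤ) ⌊2 * P⌋ ×ˢ
    Finset.Icc (⌊P ^ θ⌋ + 1) ⌊P ^ θ * R⌋ ×ˢ Finset.Icc (⌊P ^ θ⌋ + 1) ⌊P ^ θ * R⌋).filter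
      fun u => u.2.2.2 < u.2.2.1

def ff (u : ℤ × ℤ × ℤ × ℤ) : ℤ := 8 * u.2.1 * u.1 ^ 3 * (u.2.2.2 ^ 8 - u.2.2.1 ^ 8)

theorem E0_eq (P θ R α : ℝ) : E0 P θ R α = xs (UU P θ R) ff α := by
  unfold E0 xs UU
  rw [Finset.sum_filter, Finset.sum_product]
  refine Finset.sum_congr rfl fun h _ => ?_
  rw [Finset.sum_product]
  refine Finset.sum_congr rfl fun l _ => ?_
  rw [Finset.sum_product]
  refine Finset.sum_congr rfl fun m hm => ?_
  rw [← Finset.sum_filter]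
  have : Finset.Icc (⌊P ^ θ⌋ + 1) (m - 1) =
      (Finset.Icc (⌊P ^ θ⌋ + 1) ⌊P ^ θ * R⌋).filter fun x => x < m := by
    ext x
    simp only [Finset.mem_Icc, Finset.mem_filter] at hm ⊢
    omega
  rw [this]
  refine Finset.sum_congr rfl fun k _ => ?_
  congr 1
  unfold ff
  push_cast; ring

theorem gW_eq (X R α : ℝ) :
    gW 0 X R α = xs ((Finset.Icc 1 ⌊X⌋).filter fun x => IsSmooth R x) (fun x => x ^ 4) α := by
  unfold gW xs
  rw [Finset.sum_filter]
  simp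

theorem UU_rep (P θ R : ℝ) (hP : 0 ≤ P) (n : ℤ) (hn : n ≠ 0) :
    ((UU P θ R).filter fun v => ff v = n).card ≤ n.natAbs.divisors.card ^ 4 := by
  have hM : 0 ≤ ⌊P ^ θ⌋ := Int.floor_nonneg.2 (by positivity)
  have : ((UU P θ R).filter fun v => ff v = n).card ≤ (n.natAbs.divisors ×ˢ n.natAbs.divisors ×ˢ
      n.natAbs.divisors ×ˢ n.natAbs.divisors).card := by
    refine Finset.card_le_card_of_injOn (fun u => (u.1.natAbs, u.2.1.natAbs,
      (u.2.2.1 - u.2.2.2).natAbs, (u.2.2.1 + u.2.2.2).natAbs)) ?_ ?_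
    · rintro ⟨h, l, m, k⟩ H
      simp only [Finset.coe_filter, Set.mem_ofPred_eq] at H
      have e := H.2
      unfold ff at e
      simp only at e
      simp only [Finset.coe_product, Set.mem_prod, Finset.mem_coe]
      refine ⟨nat_mem n _ hn ?_, nat_mem n _ hn ?_, nat_mem n _ hn ?_, nat_mem n _ hn ?_⟩
      · exact ⟨8 * l * h ^ 2 * (k ^ 8 - m ^ 8), by rw [← e]; ring⟩
      · exact ⟨8 * h ^ 3 * (k ^ 8 - m ^ 8), by rw [← e]; ring⟩
      · exact ⟨-8 * l * h ^ 3 * ((m + k) * (m ^ 2 + k ^ 2) * (m ^ 4 + k ^ 4)), by rw [← e]; ring⟩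
      · exact ⟨-8 * l * h ^ 3 * ((m - k) * (m ^ 2 + k ^ 2) * (m ^ 4 + k ^ 4)), by rw [← e]; ring⟩
    · rintro ⟨h, l, m, k⟩ H ⟨h', l', m', k'⟩ H' e
      simp only [Finset.coe_filter, Set.mem_ofPred_eq, UU, Finset.mem_filter, Finset.mem_product,
        Finset.mem_Icc] at H H'
      simp only [Prod.mk.injEq] at e ⊢
      omega
  refine this.trans (le_of_eq ?_)
  simp only [Finset.card_product]; ring

theorem UU_mem {P θ R : ℝ} (hM0 : 0 ≤ P ^ θ) (hHP : P / (P ^ θ) ^ 4 ≤ P) (hMR : P ^ θ * R ≤ P)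
    {u : ℤ × ℤ × ℤ × ℤ} (hu : u ∈ UU P θ R) :
    ff u ≠ 0 ∧ |(ff u : ℝ)| ≤ 16 * P ^ 12 := by
  obtain ⟨h, l, m, k⟩ := u
  have hf : 0 ≤ ⌊P ^ θ⌋ := Int.floor_nonneg.2 hM0
  simp only [UU, Finset.mem_filter, Finset.mem_product, Finset.mem_Icc, Int.le_floor] at hu
  obtain ⟨⟨⟨h1, h2⟩, ⟨l1, l2⟩, ⟨m1, m2⟩, ⟨k1, k2⟩⟩, hlt⟩ := hu
  have hk : 0 < k := by omega
  have hm : 0 < m := by omega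
  have hpow : k ^ 8 < m ^ 8 := pow_lt_pow_left₀ hlt hk.le (by norm_num)
  constructor
  · unfold ff
    simp only
    have : k ^ 8 - m ^ 8 ≠ 0 := by omega
    have : l ≠ 0 := by omega
    have : h ≠ 0 := by omega
    positivity
  · have hh0 : (1 : ℝ) ≤ h := by exact_mod_cast h1
    have hl0 : (1 : ℝ) ≤ l := by exact_mod_cast l1
    have hm0 : (0 : ℝ) ≤ m := by exact_mod_cast hm.le
    have hk0 : (0 : ℝ) ≤ k := by exact_mod_cast hk.le
    have hpow' : (k : ℝ) ^ 8 < (m : ℝ) ^ 8 := by exact_mod_cast hpow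
    have hP0 : 0 ≤ P := by linarith
    unfold ff
    push_cast
    rw [abs_mul, abs_of_nonneg (by positivity), abs_of_neg (by linarith)]
    have e1 : (h : ℝ) ^ 3 ≤ P ^ 3 := pow_le_pow_left₀ (by linarith) (h2.trans hHP) 3
    have e2 : (m : ℝ) ^ 8 ≤ P ^ 8 := pow_le_pow_left₀ hm0 (m2.trans hMR) 8
    have e3 : -((k : ℝ) ^ 8 - (m : ℝ) ^ 8) ≤ P ^ 8 := by
      have : 0 ≤ (k : ℝ) ^ 8 := by positivity
      linarith
    calc 8 * (l : ℝ) * (h : ℝ) ^ 3 * (-((k : ℝ) ^ 8 - (m : ℝ) ^ 8))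
        ≤ 8 * (2 * P) * P ^ 3 * P ^ 8 := by
          apply mul_le_mul _ e3 (by linarith) (by positivity)
          gcongr
      _ = _ := by ring

theorem UU_card {P θ R : ℝ} (hP : 2 ≤ P) (hR : 1 ≤ R) :
    ((UU P θ R).card : ℝ) ≤ (P / (P ^ θ) ^ 4) * ((2 * P) * ((P ^ θ * R) * (P ^ θ * R))) := by
  have hM0 : 0 < P ^ θ := by positivity
  have hf : 0 ≤ ⌊P ^ θ⌋ := Int.floor_nonneg.2 hM0.le
  have aux : ∀ a : ℤ, 1 ≤ a → ∀ X : ℝ, 0 ≤ X → ((Finset.Icc a ⌊X⌋).card : ℝ) ≤ X := by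
    intro a ha X hX
    have h1 : (Finset.Icc a ⌊X⌋).card ≤ ⌊X⌋.toNat := by rw [Int.card_Icc]; omega
    have h2 : ((⌊X⌋.toNat : ℤ) : ℝ) ≤ X := by
      rw [Int.toNat_of_nonneg (Int.floor_nonneg.2 hX)]
      exact Int.floor_le X
    have h3 : ((Finset.Icc a ⌊X⌋).card : ℝ) ≤ (⌊X⌋.toNat : ℝ) := by exact_mod_cast h1
    exact h3.trans (by exact_mod_cast h2)
  have h1 : (UU P θ R).card ≤ _ := Finset.card_filter_le _ _
  have h2 : ((UU P θ R).card : ℝ) ≤ _ := Nat.cast_le.2 h1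
  refine h2.trans ?_
  simp only [Finset.card_product]
  push_cast
  gcongr
  · exact aux _ le_rfl _ (by positivity)
  · exact aux _ le_rfl _ (by positivity)
  · exact aux _ (by omega) _ (by positivity)
  · exact aux _ (by omega) _ (by positivity)

theorem stmt18 (θ : ℝ) (hθ0 : 0 ≤ θ) (hθ1 : θ ≤ 1 / 4) :
    ∀ ε > (0 : ℝ), ∃ η > (0 : ℝ), ∃ C > (0 : ℝ),
      ∀ P : ℝ, 2 ≤ P → ∀ R : ℝ, 1 ≤ R → R ≤ P ^ η →
        (∫ α in (0:ℝ)..1, ‖E0 P θ R α‖ ^ 2 * ‖gW 0 (2 * (P / P ^ θ)) R α‖ ^ 4)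
          ≤ C * (P * (P / (P ^ θ) ^ 4) * (P ^ θ) ^ 2) ^ 2 * (P / P ^ θ) ^ ((1 : ℝ) + ε) := by
  intro ε hε
  obtain ⟨K, hK1, hK⟩ := divisor_bound (ε / 272) (by positivity)
  refine ⟨min (3 / 4) (ε / 16), by positivity, 240 * K ^ 4, by positivity, ?_⟩
  intro P hP R hR1 hR
  have hP1 : 1 ≤ P := by linarith
  have hP0 : 0 < P := by linarith
  have hRa : R ≤ P ^ (3 / 4 : ℝ) := hR.trans (Real.rpow_le_rpow_of_exponent_le hP1 (min_le_left _ _))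
  have hRb : R ≤ P ^ (ε / 16) := hR.trans (Real.rpow_le_rpow_of_exponent_le hP1 (min_le_right _ _))
  have hM1 : 1 ≤ P ^ θ := Real.one_le_rpow hP1 hθ0
  have hMa : P ^ θ ≤ P ^ (1 / 4 : ℝ) := Real.rpow_le_rpow_of_exponent_le hP1 hθ1
  have hM4 : (P ^ θ) ^ 4 ≤ P := by
    calc (P ^ θ) ^ 4 ≤ (P ^ (1 / 4 : ℝ)) ^ 4 := by gcongr
      _ = P := by rw [← Real.rpow_natCast, ← Real.rpow_mul hP0.le]; norm_num
  have hMR : P ^ θ * R ≤ P := by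
    calc P ^ θ * R ≤ P ^ (1 / 4 : ℝ) * P ^ (3 / 4 : ℝ) := by gcongr
      _ = P := by rw [← Real.rpow_add hP0]; norm_num
  have hM0 : 0 < P ^ θ := by linarith
  have hHP : P / (P ^ θ) ^ 4 ≤ P := div_le_self hP0.le (one_le_pow₀ hM1)
  set D : ℝ := K * (P ^ (17 : ℕ)) ^ (ε / 272) with hDdef
  have hD1 : 1 ≤ D := by
    have : 1 ≤ (P ^ (17 : ℕ)) ^ (ε / 272) := Real.one_le_rpow (one_le_pow₀ hP1) (by positivity)
    nlinarith
  have hdiv : ∀ n : ℤ, n ≠ 0 → |(n : ℝ)| ≤ 32 * P ^ 12 → (n.natAbs.divisors.card : ℝ) ≤ D := by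
    intro n hn hb
    refine (hK n.natAbs (by simpa using hn)).trans ?_
    rw [hDdef]
    gcongr
    rw [Nat.cast_natAbs, Int.cast_abs]
    refine hb.trans ?_
    have : (2 : ℝ) ^ 5 ≤ P ^ 5 := pow_le_pow_left₀ (by norm_num) hP 5
    calc 32 * P ^ 12 ≤ P ^ 5 * P ^ 12 := by gcongr; linarith
      _ = _ := by ring
  have hXn : 0 ≤ 2 * (P / P ^ θ) := by positivity
  have hN : (⌊2 * (P / P ^ θ)⌋₊ : ℝ) ≤ 2 * (P / P ^ θ) := Nat.floor_le hXn
  have main := count_all (UU P θ R) ff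
    ((Finset.Icc 1 ⌊2 * (P / P ^ θ)⌋).filter fun x => IsSmooth R x) ⌊2 * (P / P ^ θ)⌋₊
    (by rw [Int.natCast_floor_eq_floor hXn]; exact Finset.filter_subset _ _) D (by linarith)
    (by
      intro u hu v hv hne
      refine hdiv _ hne ?_
      have a := (UU_mem hM0.le hHP hMR hu).2
      have b := (UU_mem hM0.le hHP hMR hv).2
      push_cast
      refine (abs_sub _ _).trans ?_
      linarith)
    (by
      intro u hu
      obtain ⟨a, b⟩ := UU_mem hM0.le hHP hMR hu
      have h1 := UU_rep P θ R hP0.le _ a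
      have h2 : (((UU P θ R).filter fun v => ff v = ff u).card : ℝ) ≤
        ((ff u).natAbs.divisors.card : ℝ) ^ 4 := by exact_mod_cast h1
      refine h2.trans ?_
      have : 0 ≤ P ^ 12 := by positivity
      have := hdiv _ a (by linarith)
      gcongr)
  simp_rw [E0_eq, gW_eq]
  refine main.trans ?_
  have hU := UU_card (θ := θ) hP hR1
  have hN0 : (0 : ℝ) ≤ (⌊2 * (P / P ^ θ)⌋₊ : ℝ) := Nat.cast_nonneg _
  have hU0 : (0 : ℝ) ≤ ((UU P θ R).card : ℝ) := Nat.cast_nonneg _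
  generalize (⌊2 * (P / P ^ θ)⌋₊ : ℝ) = N' at hN hN0 ⊢
  generalize ((UU P θ R).card : ℝ) = u at hU hU0 ⊢
  -- the main parameters
  have hMP : P ^ θ ≤ P := (le_self_pow₀ hM1 (by norm_num)).trans hM4
  have hW : P * (P / (P ^ θ) ^ 4) * (P ^ θ) ^ 2 = (P / P ^ θ) ^ 2 := by field_simp
  have hU' : u ≤ 2 * (P / P ^ θ) ^ 2 * R ^ 2 := by
    rw [← hW]
    refine hU.trans (le_of_eq ?_)
    ring
  have hQ2 : P ≤ (P / P ^ θ) ^ 2 := by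
    have h2 : (P ^ θ) ^ 2 ≤ P := (pow_le_pow_right₀ hM1 (by norm_num)).trans hM4
    rw [div_pow, le_div_iff₀ (by positivity)]
    nlinarith
  have hQ1 : 1 ≤ P / P ^ θ := by rw [le_div_iff₀ hM0]; linarith
  rw [hW]
  generalize hQ : P / P ^ θ = Q at *
  have hQ0 : 0 < Q := by linarith
  have hfin : R ^ 4 * D ^ 4 ≤ K ^ 4 * Q ^ ε := by
    have hD4 : D ^ 4 = K ^ 4 * P ^ (ε / 4) := by
      rw [hDdef, mul_pow]
      congr 1
      rw [← Real.rpow_natCast, ← Real.rpow_natCast, ← Real.rpow_mul hP0.le, ← Real.rpow_mul hP0.le]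
      congr 1; push_cast; ring
    have hR4 : R ^ 4 ≤ P ^ (ε / 4) := by
      calc R ^ 4 ≤ (P ^ (ε / 16)) ^ 4 := by gcongr
        _ = _ := by
          rw [← Real.rpow_natCast, ← Real.rpow_mul hP0.le]
          congr 1; push_cast; ring
    rw [hD4]
    calc R ^ 4 * (K ^ 4 * P ^ (ε / 4)) ≤ P ^ (ε / 4) * (K ^ 4 * P ^ (ε / 4)) := by gcongr
      _ = K ^ 4 * P ^ (ε / 2) := by
          rw [mul_left_comm, ← Real.rpow_add hP0]; congr 2; ring
      _ ≤ K ^ 4 * (Q ^ 2) ^ (ε / 2) := by gcongr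
      _ = K ^ 4 * Q ^ ε := by
          rw [← Real.rpow_natCast Q, ← Real.rpow_mul hQ0.le]; congr 2; push_cast; ring
  rw [Real.rpow_add hQ0, Real.rpow_one]
  have hR24 : R ^ 2 ≤ R ^ 4 := pow_le_pow_right₀ hR1 (by norm_num)
  have hD24 : D ^ 2 ≤ D ^ 4 := pow_le_pow_right₀ hD1 (by norm_num)
  calc (2 * N' + 1) * (4 * N' ^ 2 * (u * D ^ 4) + 4 * D ^ 2 * u ^ 2)
      ≤ (2 * (2 * Q) + Q) * (4 * (2 * Q) ^ 2 * ((2 * Q ^ 2 * R ^ 2) * D ^ 4)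
          + 4 * D ^ 2 * (2 * Q ^ 2 * R ^ 2) ^ 2) := by gcongr
    _ = 5 * Q ^ 5 * (32 * (R ^ 2 * D ^ 4) + 16 * (R ^ 4 * D ^ 2)) := by ring
    _ ≤ 5 * Q ^ 5 * (32 * (R ^ 4 * D ^ 4) + 16 * (R ^ 4 * D ^ 4)) := by gcongr
    _ = 240 * Q ^ 5 * (R ^ 4 * D ^ 4) := by ring
    _ ≤ 240 * Q ^ 5 * (K ^ 4 * Q ^ ε) := by gcongr
    _ = _ := by ring
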